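/- arXiv:1706.07175 — 2 statements merged into one kernel-verified Lean document; each statement's English description precedes it below -/
import Mathlib

section
/- Let E ⊂ ℂ^N be a nonempty compact determining set and let q be an E-admissible norm on ℙ(ℂ^N). Then the limit lim_{k→∞} m_k(q)/k exists and equals m(E); in particular m*(q) = m(E) and m(E) ≤ m(q). -/
open MvPolynomial Filter
open scoped ENNReal

/-- The partial-derivative operator `D^α = ∂^{|α|}/∂x₁^{α₁}⋯∂x_N^{α_N}` on
polynomials in `N` variables. -/
noncomputable def mvDeriv {N : ℕ} (α : Fin N → ℕ) (P : MvPolynomial (Fin N) ℂ) :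
    MvPolynomial (Fin N) ℂ :=
  (List.ofFn fun j : Fin N =>
      (fun Q : MvPolynomial (Fin N) ℂ => MvPolynomial.pderiv j Q)^[α j]).foldl
    (fun Q f => f Q) P

/-- `q` is a norm on the complex vector space `ℙ(ℂ^N)` of polynomials. -/
structure IsPolyNorm {N : ℕ} (q : MvPolynomial (Fin N) ℂ → ℝ) : Prop where
  nonneg : ∀ P, 0 ≤ q P
  definite : ∀ P, q P = 0 → P = 0
  triangle : ∀ P Q, q (P + Q) ≤ q P + q Q
  homog : ∀ (c : ℂ) (P), q (c • P) = ‖c‖ * q P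

/-- The Markov exponent `m(α, q) ∈ [0,∞]`: the infimum of the set of `s > 0` such that
`q(D^α P) ≤ M (deg P)^s q(P)` holds for some `M > 0` and all `P` with `deg P ≥ 1`
(`sInf ∅ = ∞` in `ℝ≥0∞`). -/
noncomputable def mExp {N : ℕ} (q : MvPolynomial (Fin N) ℂ → ℝ) (α : Fin N → ℕ) : ℝ≥0∞ :=
  sInf (ENNReal.ofReal '' {s : ℝ | 0 < s ∧ ∃ M : ℝ, 0 < M ∧
    ∀ P : MvPolynomial (Fin N) ℂ, 1 ≤ P.totalDegree →
      q (mvDeriv α P) ≤ M * (P.totalDegree : ℝ) ^ s * q P})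

/-- `m_k(q) = max {m(α,q) : |α| = k}`. -/
noncomputable def mkExp {N : ℕ} (q : MvPolynomial (Fin N) ℂ → ℝ) (k : ℕ) : ℝ≥0∞ :=
  ⨆ α ∈ {α : Fin N → ℕ | ∑ j, α j = k}, mExp q α

/-- The asymptotic Markov exponent `m*(q) = limsup_k m_k(q)/k`. -/
noncomputable def mStar {N : ℕ} (q : MvPolynomial (Fin N) ℂ → ℝ) : ℝ≥0∞ :=
  Filter.atTop.limsup fun k : ℕ => mkExp q k / (k : ℝ≥0∞)

/-- The supremum norm `‖P‖_E = sup_{z ∈ E} |P(z)|` on polynomials. -/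
noncomputable def supNorm {N : ℕ} (E : Set (Fin N → ℂ)) (P : MvPolynomial (Fin N) ℂ) : ℝ :=
  ⨆ z : E, ‖MvPolynomial.eval (z : Fin N → ℂ) P‖

/-- `max 1 (deg P)` as a real number. -/
noncomputable def dg {N : ℕ} (P : MvPolynomial (Fin N) ℂ) : ℝ := max 1 (P.totalDegree : ℝ)

/-- Markov inequality with exponent `s`. -/
def Mk {N : ℕ} (q : MvPolynomial (Fin N) ℂ → ℝ) (α : Fin N → ℕ) (s : ℝ) : Prop :=
  ∃ M : ℝ, 0 < M ∧ ∀ P : MvPolynomial (Fin N) ℂ, q (mvDeriv α P) ≤ M * dg P ^ s * q P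

lemma one_le_dg {N : ℕ} (P : MvPolynomial (Fin N) ℂ) : 1 ≤ dg P := le_max_left _ _

lemma dg_pos {N : ℕ} (P : MvPolynomial (Fin N) ℂ) : 0 < dg P :=
  lt_of_lt_of_le one_pos (one_le_dg P)

lemma dg_eq {N : ℕ} (P : MvPolynomial (Fin N) ℂ) (h : 1 ≤ P.totalDegree) :
    dg P = P.totalDegree := max_eq_right (by exact_mod_cast h)

lemma dg_mono {N : ℕ} {P Q : MvPolynomial (Fin N) ℂ} (h : P.totalDegree ≤ Q.totalDegree) :
    dg P ≤ dg Q := max_le_max le_rfl (by exact_mod_cast h)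

lemma deg_pderiv {N : ℕ} (j : Fin N) (P : MvPolynomial (Fin N) ℂ) :
    (pderiv j P).totalDegree ≤ P.totalDegree := by
  classical
  conv_lhs => rw [P.as_sum, map_sum]
  refine (totalDegree_finset_sum _ _).trans (Finset.sup_le fun m hm => ?_)
  rw [pderiv_monomial]
  refine (totalDegree_monomial_le _ _).trans ?_
  refine le_trans ?_ (le_totalDegree hm)
  have : (m - Finsupp.single j 1) ≤ m := tsub_le_self
  exact Finsupp.degree_mono this

lemma deg_iter {N : ℕ} (j : Fin N) (n : ℕ) (P : MvPolynomial (Fin N) ℂ) :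
    ((fun Q => pderiv j Q)^[n] P).totalDegree ≤ P.totalDegree := by
  induction n generalizing P with
  | zero => simp
  | succ n ih => rw [Function.iterate_succ_apply]; exact (ih _).trans (deg_pderiv j P)

lemma mvDeriv_eq {N : ℕ} (α : Fin N → ℕ) (P : MvPolynomial (Fin N) ℂ) :
    mvDeriv α P = (List.finRange N).foldl (fun Q j => (fun Q => pderiv j Q)^[α j] Q) P := by
  rw [mvDeriv, List.ofFn_eq_map, List.foldl_map]

lemma deg_foldl {N : ℕ} (α : Fin N → ℕ) (L : List (Fin N)) (P : MvPolynomial (Fin N) ℂ) :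
    (L.foldl (fun Q j => (fun Q => pderiv j Q)^[α j] Q) P).totalDegree ≤ P.totalDegree := by
  induction L generalizing P with
  | nil => simp
  | cons j L ih => rw [List.foldl_cons]; exact (ih _).trans (deg_iter j _ P)

lemma deg_mvDeriv {N : ℕ} (α : Fin N → ℕ) (P : MvPolynomial (Fin N) ℂ) :
    (mvDeriv α P).totalDegree ≤ P.totalDegree := by
  rw [mvDeriv_eq]; exact deg_foldl α _ P

lemma foldl_single {N : ℕ} (j : Fin N) (k : ℕ) (L : List (Fin N))
    (P : MvPolynomial (Fin N) ℂ) :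
    L.foldl (fun Q i => (fun Q => pderiv i Q)^[(Pi.single j k : Fin N → ℕ) i] Q) P
      = (fun Q => pderiv j Q)^[k * L.count j] P := by
  induction L generalizing P with
  | nil => simp
  | cons i L ih =>
    rw [List.foldl_cons, ih]
    by_cases h : i = j
    · subst h
      rw [Pi.single_eq_same, ← Function.iterate_add_apply, List.count_cons_self, Nat.mul_succ]
    · rw [Pi.single_eq_of_ne h, List.count_cons_of_ne h]; simp

lemma mvDeriv_single {N : ℕ} (j : Fin N) (k : ℕ) (P : MvPolynomial (Fin N) ℂ) :
    mvDeriv (Pi.single j k) P = (fun Q => pderiv j Q)^[k] P := by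
  rw [mvDeriv_eq, foldl_single, List.count_eq_one_of_mem (List.nodup_finRange N)
    (List.mem_finRange j), mul_one]

lemma iter_const {N : ℕ} (j : Fin N) (n : ℕ) (c : ℂ) :
    ∃ d : ℂ, (fun Q => pderiv j Q)^[n] (C c : MvPolynomial (Fin N) ℂ) = C d ∧ (d = c ∨ d = 0) := by
  induction n generalizing c with
  | zero => exact ⟨c, rfl, Or.inl rfl⟩
  | succ n ih =>
    rw [Function.iterate_succ_apply]
    obtain ⟨d, h, h'⟩ := ih 0
    refine ⟨d, ?_, Or.inr (by tauto)⟩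
    simpa using h

lemma foldl_const {N : ℕ} (α : Fin N → ℕ) (L : List (Fin N)) (c : ℂ) :
    ∃ d : ℂ, L.foldl (fun Q j => (fun Q => pderiv j Q)^[α j] Q) (C c : MvPolynomial (Fin N) ℂ)
      = C d ∧ (d = c ∨ d = 0) := by
  induction L generalizing c with
  | nil => exact ⟨c, rfl, Or.inl rfl⟩
  | cons j L ih =>
    obtain ⟨d, h, h'⟩ := iter_const j (α j) c
    obtain ⟨e, h2, h2'⟩ := ih d
    refine ⟨e, by rw [List.foldl_cons, h, h2], ?_⟩
    rcases h' with rfl | rfl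
    · exact h2'
    · right; tauto

lemma q_zero {N : ℕ} {q : MvPolynomial (Fin N) ℂ → ℝ} (hq : IsPolyNorm q) : q 0 = 0 := by
  have := hq.homog 0 0
  simpa using this

lemma mExp_le {N : ℕ} {q : MvPolynomial (Fin N) ℂ → ℝ} {α : Fin N → ℕ} {s : ℝ}
    (hs : 0 < s) (h : Mk q α s) : mExp q α ≤ ENNReal.ofReal s := by
  obtain ⟨M, hM, h⟩ := h
  refine sInf_le ⟨s, ⟨hs, M, hM, fun P hP => ?_⟩, rfl⟩
  rw [← dg_eq P hP]; exact h P

lemma Mk_of {N : ℕ} {q : MvPolynomial (Fin N) ℂ → ℝ} (hq : IsPolyNorm q) {α : Fin N → ℕ} {s : ℝ}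
    (h : ∃ M : ℝ, 0 < M ∧ ∀ P : MvPolynomial (Fin N) ℂ, 1 ≤ P.totalDegree →
      q (mvDeriv α P) ≤ M * (P.totalDegree : ℝ) ^ s * q P) : Mk q α s := by
  obtain ⟨M, hM, h⟩ := h
  refine ⟨max M 1, by positivity, fun P => ?_⟩
  by_cases hP : 1 ≤ P.totalDegree
  · refine (h P hP).trans ?_
    rw [dg_eq P hP]
    have := hq.nonneg P
    gcongr
    exact le_max_left _ _
  · have h0 : P.totalDegree = 0 := by omega
    have hd : dg P = 1 := by simp [dg, h0]
    rw [hd, Real.one_rpow, mul_one]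
    obtain ⟨c, rfl⟩ : ∃ c, P = C c := ⟨_, totalDegree_eq_zero_iff_eq_C.mp h0⟩
    obtain ⟨d, h1, h2⟩ := foldl_const α (List.finRange N) c
    rw [mvDeriv_eq, h1]
    have h3 := hq.nonneg (C c)
    have h4 : (1 : ℝ) ≤ max M 1 := le_max_right _ _
    rcases h2 with rfl | rfl
    · nlinarith
    · rw [C_0, q_zero hq]; positivity

lemma le_mExp {N : ℕ} {q : MvPolynomial (Fin N) ℂ → ℝ} (hq : IsPolyNorm q) {α : Fin N → ℕ}
    {x : ℝ≥0∞} (h : ∀ s, 0 < s → Mk q α s → x ≤ ENNReal.ofReal s) : x ≤ mExp q α := by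
  refine le_sInf ?_
  rintro _ ⟨s, ⟨hs, h1⟩, rfl⟩
  exact h s hs (Mk_of hq h1)

lemma Mk_of_lt {N : ℕ} {q : MvPolynomial (Fin N) ℂ → ℝ} (hq : IsPolyNorm q) {α : Fin N → ℕ}
    {s : ℝ} (h : mExp q α < ENNReal.ofReal s) : Mk q α s := by
  obtain ⟨_, ⟨t, ⟨ht, h1⟩, rfl⟩, h2⟩ := sInf_lt_iff.mp h
  have hts : t < s := (ENNReal.ofReal_lt_ofReal_iff_of_nonneg ht.le).mp h2
  obtain ⟨M, hM, h3⟩ := Mk_of hq h1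
  refine ⟨M, hM, fun P => (h3 P).trans ?_⟩
  have := hq.nonneg P
  gcongr
  exact one_le_dg P

lemma transfer {N : ℕ} {q r : MvPolynomial (Fin N) ℂ → ℝ} (hq : IsPolyNorm q) (hr : IsPolyNorm r)
    {A B a b : ℝ} (hA : 0 < A) (hB : 0 < B) (ha : 0 ≤ a) (hb : 0 ≤ b)
    (h1 : ∀ P, q P ≤ A * dg P ^ a * r P) (h2 : ∀ P, r P ≤ B * dg P ^ b * q P) (k : ℕ) :
    mkExp r k ≤ mkExp q k + ENNReal.ofReal (a + b) := by
  refine iSup₂_le fun α hα => ?_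
  refine le_trans ?_ (add_le_add_left (le_iSup₂ (f := fun α _ => mExp q α) α hα) _)
  rw [← tsub_le_iff_right]
  refine le_mExp hq fun s hs ⟨M, hM, h⟩ => ?_
  rw [tsub_le_iff_right, ← ENNReal.ofReal_add hs.le (by positivity)]
  refine mExp_le (by positivity) ⟨B * M * A, by positivity, fun P => ?_⟩
  have hd := dg_pos P
  have hd' := dg_pos (mvDeriv α P)
  have hqn := hq.nonneg (mvDeriv α P)
  have hdd := dg_mono (deg_mvDeriv α P)
  calc r (mvDeriv α P) ≤ B * dg (mvDeriv α P) ^ b * q (mvDeriv α P) := h2 _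
    _ ≤ B * dg P ^ b * (M * dg P ^ s * (A * dg P ^ a * r P)) := by
        gcongr
        refine (h P).trans ?_
        gcongr
        exact h1 P
    _ = _ := by rw [Real.rpow_add hd, Real.rpow_add hd]; ring

lemma iter_bound {N : ℕ} {q : MvPolynomial (Fin N) ℂ → ℝ} {s : ℝ} (hs : 0 < s)
    {M : ℝ} (hM : 0 < M) (j : Fin N)
    (h : ∀ P, q (pderiv j P) ≤ M * dg P ^ s * q P) (hq : IsPolyNorm q) (n : ℕ)
    (P : MvPolynomial (Fin N) ℂ) :
    q ((fun Q => pderiv j Q)^[n] P) ≤ (M * dg P ^ s) ^ n * q P := by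
  induction n with
  | zero => simp
  | succ n ih =>
    rw [Function.iterate_succ_apply']
    refine (h _).trans ?_
    have := dg_pos ((fun Q => pderiv j Q)^[n] P)
    have h2 := dg_pos P
    have h3 := dg_mono (deg_iter j n P)
    have := hq.nonneg ((fun Q => pderiv j Q)^[n] P)
    rw [pow_succ', mul_assoc (M * dg P ^ s)]
    gcongr

lemma foldl_bound {N : ℕ} {q : MvPolynomial (Fin N) ℂ → ℝ} {s : ℝ} (hs : 0 < s)
    {M : ℝ} (hM : 0 < M)
    (h : ∀ j P, q (pderiv j P) ≤ M * dg P ^ s * q P) (hq : IsPolyNorm q) (α : Fin N → ℕ)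
    (L : List (Fin N)) (P : MvPolynomial (Fin N) ℂ) :
    q (L.foldl (fun Q j => (fun Q => pderiv j Q)^[α j] Q) P)
      ≤ (M * dg P ^ s) ^ (L.map α).sum * q P := by
  induction L generalizing P with
  | nil => simp
  | cons j L ih =>
    rw [List.foldl_cons, List.map_cons, List.sum_cons, add_comm, pow_add, mul_assoc]
    refine (ih _).trans ?_
    have h1 := dg_pos ((fun Q => pderiv j Q)^[α j] P)
    have h2 := dg_pos P
    have h3 := dg_mono (deg_iter j (α j) P)
    have := hq.nonneg ((fun Q => pderiv j Q)^[α j] P)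
    have h4 := iter_bound hs hM j (h j) hq (α j) P
    gcongr

lemma mkExp_le {N : ℕ} {q : MvPolynomial (Fin N) ℂ → ℝ} (hq : IsPolyNorm q) {k : ℕ}
    (hk : 1 ≤ k) : mkExp q k / k ≤ mkExp q 1 := by
  refine le_of_forall_gt_imp_ge_of_dense fun c hc => ?_
  obtain ⟨s, hs1, hs2⟩ := ENNReal.lt_iff_exists_nnreal_btwn.mp hc
  refine le_trans ?_ hs2.le
  have hs0 : 0 < (s : ℝ) := by
    have : (0 : ℝ≥0∞) < s := lt_of_le_of_lt bot_le hs1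
    exact_mod_cast this
  have hj : ∀ j : Fin N, Mk q (Pi.single j 1) s := fun j => by
    refine Mk_of_lt hq (lt_of_le_of_lt ?_ (by simpa using hs1))
    exact le_iSup₂ (f := fun α _ => mExp q α) (Pi.single j 1) (by simp)
  choose M hM hj using hj
  have hM1 : ∀ j P, q (pderiv j P) ≤ (1 + ∑ i, M i) * dg P ^ (s : ℝ) * q P := fun j P => by
    have h1 := hj j P
    rw [mvDeriv_single] at h1
    refine h1.trans ?_
    have := hq.nonneg P
    have := dg_pos P
    have : M j ≤ ∑ i, M i := Finset.single_le_sum (fun i _ => (hM i).le) (Finset.mem_univ j)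
    gcongr
    linarith
  have hMp : 0 < 1 + ∑ i, M i := by
    have : 0 ≤ ∑ i, M i := Finset.sum_nonneg fun i _ => (hM i).le
    linarith
  refine ENNReal.div_le_of_le_mul' (iSup₂_le fun α hα => ?_)
  have hk' : (0 : ℝ) < k := by exact_mod_cast hk
  have : (k : ℝ≥0∞) * s = ENNReal.ofReal (k * s) := by
    rw [ENNReal.ofReal_mul hk'.le]; simp
  rw [this]
  refine mExp_le (by positivity) ⟨(1 + ∑ i, M i) ^ k, by positivity, fun P => ?_⟩
  have h2 := foldl_bound hs0 hMp hM1 hq α (List.finRange N) P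
  rw [← mvDeriv_eq, ← List.ofFn_eq_map, List.sum_ofFn, show ∑ j, α j = k from hα, mul_pow,
    ← Real.rpow_mul_natCast (dg_pos P).le, mul_comm (s : ℝ)] at h2
  exact h2

lemma key {N : ℕ} (j : Fin N) (W : MvPolynomial (Fin N) ℂ) (m : ℕ) (X : MvPolynomial (Fin N) ℂ) :
    ∃ R, (fun Q => pderiv j Q)^[m] (W ^ m * X) = (m.factorial : MvPolynomial (Fin N) ℂ) *
      (pderiv j W) ^ m * X + W * R := by
  induction m generalizing X with
  | zero => exact ⟨0, by simp⟩
  | succ m ih =>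
    rw [Function.iterate_succ_apply]
    have : pderiv j (W ^ (m + 1) * X) =
        W ^ m * ((m + 1 : ℕ) * pderiv j W * X + W * pderiv j X) := by
      rw [Derivation.leibniz, Derivation.leibniz_pow]
      simp only [smul_eq_mul, nsmul_eq_mul, Nat.add_sub_cancel]
      ring
    simp only [this]
    obtain ⟨R, hR⟩ := ih ((m + 1 : ℕ) * pderiv j W * X + W * pderiv j X)
    rw [hR]
    refine ⟨(m.factorial : MvPolynomial (Fin N) ℂ) * pderiv j W ^ m * pderiv j X + R, ?_⟩
    rw [Nat.factorial_succ]
    push_cast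
    ring

lemma supBdd {N : ℕ} {E : Set (Fin N → ℂ)} (hE : IsCompact E) (P : MvPolynomial (Fin N) ℂ) :
    BddAbove (Set.range fun z : E => ‖eval (z : Fin N → ℂ) P‖) := by
  have h : ContinuousOn (fun z => ‖eval z P‖) E := (MvPolynomial.continuous_eval P).norm.continuousOn
  have := hE.bddAbove_image h
  rwa [Set.image_eq_range] at this

lemma le_sup {N : ℕ} {E : Set (Fin N → ℂ)} (hE : IsCompact E) (P : MvPolynomial (Fin N) ℂ)
    {z : Fin N → ℂ} (hz : z ∈ E) : ‖eval z P‖ ≤ supNorm E P :=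
  le_ciSup (supBdd hE P) (⟨z, hz⟩ : E)

lemma sup_le' {N : ℕ} {E : Set (Fin N → ℂ)} (hne : E.Nonempty) (P : MvPolynomial (Fin N) ℂ)
    {c : ℝ} (h : ∀ z ∈ E, ‖eval z P‖ ≤ c) : supNorm E P ≤ c := by
  haveI := hne.to_subtype
  exact ciSup_le fun z => h z z.2

lemma sup_norm {N : ℕ} {E : Set (Fin N → ℂ)} (hE : IsCompact E) (hne : E.Nonempty)
    (hdet : ∀ P : MvPolynomial (Fin N) ℂ, supNorm E P = 0 → P = 0) : IsPolyNorm (supNorm E) where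
  nonneg P := Real.iSup_nonneg fun _ => norm_nonneg _
  definite := hdet
  triangle P Q := sup_le' hne _ fun z hz => by
    rw [map_add]
    exact (norm_add_le _ _).trans (add_le_add (le_sup hE P hz) (le_sup hE Q hz))
  homog c P := by
    unfold supNorm
    simp only [smul_eval, norm_mul]
    rw [Real.mul_iSup_of_nonneg (norm_nonneg c)]

lemma Mk_root {N : ℕ} {E : Set (Fin N → ℂ)} (hE : IsCompact E) (hne : E.Nonempty)
    (j : Fin N) {k : ℕ} (hk : 1 ≤ k) {s : ℝ} (hs : 0 < s)
    (h : Mk (supNorm E) (Pi.single j k) s) : Mk (supNorm E) (Pi.single j 1) (s / k) := by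
  obtain ⟨M, hM, h⟩ := h
  have hk0 : k ≠ 0 := by omega
  have hk' : (0 : ℝ) < k := by exact_mod_cast hk
  refine ⟨(M * (k : ℝ) ^ s) ^ (1 / k : ℝ) * 2, by positivity, fun P => ?_⟩
  rw [mvDeriv_single]
  refine sup_le' hne _ fun z hz => ?_
  simp only [Function.iterate_one]
  have hn : 0 ≤ supNorm E P := Real.iSup_nonneg fun _ => norm_nonneg _
  have hd := dg_pos P
  set W := P - C (eval z P) with hW
  have hWz : eval z W = 0 := by simp [hW]
  have hDW : pderiv j W = pderiv j P := by simp [hW]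
  obtain ⟨R, hR⟩ := key j W k 1
  have h1 := h (W ^ k)
  rw [mvDeriv_single] at h1
  have h2 := (le_sup hE _ hz).trans h1
  rw [mul_one] at hR
  rw [hR] at h2
  simp only [map_add, map_mul, map_pow, hWz, zero_mul, add_zero, mul_one, hDW, map_natCast,
    norm_mul, norm_pow, map_one] at h2
  have h3 : supNorm E (W ^ k) ≤ (2 * supNorm E P) ^ k := by
    refine sup_le' hne _ fun y hy => ?_
    rw [map_pow, norm_pow]
    gcongr
    rw [hW, map_sub, eval_C]
    refine (norm_sub_le _ _).trans ?_
    have := le_sup hE P hy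
    have := le_sup hE P hz
    linarith
  have h4 : dg (W ^ k) ≤ k * dg P := by
    have hk1 : (1 : ℝ) ≤ k := by exact_mod_cast hk
    refine max_le ?_ ?_
    · nlinarith [one_le_dg P]
    · have e1 : (W ^ k).totalDegree ≤ k * P.totalDegree :=
        (totalDegree_pow _ _).trans (Nat.mul_le_mul_left _ (totalDegree_sub_C_le _ _))
      have e2 : ((W ^ k).totalDegree : ℝ) ≤ k * P.totalDegree := by exact_mod_cast e1
      refine e2.trans ?_
      gcongr
      exact le_max_right _ _
  have h5 : ‖eval z (pderiv j P)‖ ^ k ≤ ((M * (k : ℝ) ^ s) ^ (1 / k : ℝ) * 2 * dg P ^ (s / k) *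
      supNorm E P) ^ k := by
    have f1 : ((M * (k : ℝ) ^ s) ^ (1 / k : ℝ)) ^ k = M * (k : ℝ) ^ s := by
      rw [← Real.rpow_mul_natCast (by positivity), one_div, inv_mul_cancel₀ hk'.ne', Real.rpow_one]
    have f2 : (dg P ^ (s / k)) ^ k = dg P ^ s := by
      rw [← Real.rpow_mul_natCast (by positivity), div_mul_cancel₀ _ hk'.ne']
    have f3 : (1 : ℝ) ≤ ‖(k.factorial : ℂ)‖ := by
      rw [Complex.norm_natCast]; exact_mod_cast k.factorial_pos
    calc ‖eval z (pderiv j P)‖ ^ k ≤ ‖(k.factorial : ℂ)‖ * ‖eval z (pderiv j P)‖ ^ k :=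
          le_mul_of_one_le_left (by positivity) f3
      _ ≤ _ := h2
      _ ≤ M * (k * dg P) ^ s * (2 * supNorm E P) ^ k := by
          have := dg_pos (W ^ k)
          have : 0 ≤ supNorm E (W ^ k) := Real.iSup_nonneg fun _ => norm_nonneg _
          gcongr
      _ = _ := by
          rw [mul_pow, mul_pow, mul_pow _ _ k, mul_pow _ _ k, f1, f2,
            Real.mul_rpow hk'.le hd.le]
          ring
  exact (pow_le_pow_iff_left₀ (norm_nonneg _) (by positivity) hk0).mp h5

lemma le_mkExp {N : ℕ} {E : Set (Fin N → ℂ)} (hE : IsCompact E) (hne : E.Nonempty)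
    (hdet : ∀ P : MvPolynomial (Fin N) ℂ, supNorm E P = 0 → P = 0) {k : ℕ} (hk : 1 ≤ k) :
    mkExp (supNorm E) 1 ≤ mkExp (supNorm E) k / k := by
  have hk0 : (k : ℝ≥0∞) ≠ 0 := by exact_mod_cast (by omega : k ≠ 0)
  have hk' : (0 : ℝ) < k := by exact_mod_cast hk
  refine iSup₂_le fun α hα => ?_
  obtain ⟨j, rfl⟩ : ∃ j, α = Pi.single j 1 := by
    have hα : ∑ j, α j = 1 := hα
    obtain ⟨j, -, hj⟩ : ∃ j ∈ Finset.univ, α j ≠ 0 := by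
      apply Finset.exists_ne_zero_of_sum_ne_zero
      omega
    rw [← Finset.add_sum_erase _ _ (Finset.mem_univ j)] at hα
    have h0 : ∑ i ∈ Finset.univ.erase j, α i = 0 := by omega
    refine ⟨j, funext fun i => ?_⟩
    by_cases hi : i = j
    · subst hi; rw [Pi.single_eq_same]; omega
    · rw [Pi.single_eq_of_ne hi]
      exact Finset.sum_eq_zero_iff.mp h0 i (by simp [hi])
  rw [ENNReal.le_div_iff_mul_le (Or.inl hk0) (Or.inl (ENNReal.natCast_ne_top k))]
  refine le_trans ?_ (le_iSup₂ (f := fun α _ => mExp (supNorm E) α) (Pi.single j k) (by simp))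
  refine le_mExp (sup_norm hE hne hdet) fun s hs h => ?_
  have h1 := mExp_le (div_pos hs hk') (Mk_root hE hne j hk hs h)
  calc _ ≤ ENNReal.ofReal (s / k) * k := by gcongr
    _ = ENNReal.ofReal s := by
      rw [← ENNReal.ofReal_natCast k, ← ENNReal.ofReal_mul (by positivity),
        div_mul_cancel₀ _ hk'.ne']

lemma extend {N : ℕ} {q r : MvPolynomial (Fin N) ℂ → ℝ} (hq : IsPolyNorm q) (hr : IsPolyNorm r)
    {A a : ℝ} (hA : 0 < A)
    (h : ∀ P : MvPolynomial (Fin N) ℂ, 1 ≤ P.totalDegree → q P ≤ A * (P.totalDegree : ℝ) ^ a * r P) :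
    ∃ A', 0 < A' ∧ ∀ P, q P ≤ A' * dg P ^ a * r P := by
  have hr1 : 0 < r 1 := lt_of_le_of_ne (hr.nonneg 1) fun h0 => one_ne_zero (hr.definite 1 h0.symm)
  have hq1 := hq.nonneg 1
  refine ⟨A + q 1 / r 1, by positivity, fun P => ?_⟩
  have hP0 := hr.nonneg P
  by_cases hP : 1 ≤ P.totalDegree
  · refine (h P hP).trans ?_
    rw [dg_eq P hP]
    gcongr
    have : 0 ≤ q 1 / r 1 := by positivity
    linarith
  · have h0 : P.totalDegree = 0 := by omega
    have hd : dg P = 1 := by simp [dg, h0]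
    rw [hd, Real.one_rpow, mul_one]
    obtain ⟨c, rfl⟩ : ∃ c, P = c • 1 := ⟨coeff 0 P, by
      conv_lhs => rw [totalDegree_eq_zero_iff_eq_C.mp h0]
      rw [← C_mul', mul_one]⟩
    rw [hq.homog, hr.homog, add_mul]
    have e : q 1 / r 1 * (‖c‖ * r 1) = ‖c‖ * q 1 := by field_simp
    rw [e]
    have : 0 ≤ A * (‖c‖ * r 1) := by positivity
    linarith

/-- If `E ⊂ ℂ^N` is a nonempty compact determining set and `q` is an
`E`-admissible norm on `ℙ(ℂ^N)`, then `lim_{k→∞} m_k(q)/k` exists and equals `m(E)`;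
in particular `m*(q) = m(E)` and `m(E) ≤ m(q)`. -/
theorem statement1 {N : ℕ} (E : Set (Fin N → ℂ)) (hE : IsCompact E) (hne : E.Nonempty)
    (hdet : ∀ P : MvPolynomial (Fin N) ℂ, supNorm E P = 0 → P = 0)
    (q : MvPolynomial (Fin N) ℂ → ℝ) (hq : IsPolyNorm q)
    (A B a b : ℝ) (hA : 0 < A) (hB : 0 < B) (ha : 0 ≤ a) (hb : 0 ≤ b)
    (hup : ∀ P : MvPolynomial (Fin N) ℂ, 1 ≤ P.totalDegree →
      supNorm E P ≤ A * (P.totalDegree : ℝ) ^ a * q P)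
    (hdown : ∀ P : MvPolynomial (Fin N) ℂ, 1 ≤ P.totalDegree →
      q P ≤ B * (P.totalDegree : ℝ) ^ b * supNorm E P) :
    Tendsto (fun k : ℕ => mkExp q k / (k : ℝ≥0∞)) atTop (nhds (mkExp (supNorm E) 1)) ∧
      mStar q = mkExp (supNorm E) 1 ∧ mkExp (supNorm E) 1 ≤ mkExp q 1 := by
  have hS := sup_norm hE hne hdet
  obtain ⟨A', hA', h1⟩ := extend hS hq hA hup
  obtain ⟨B', hB', h2⟩ := extend hq hS hB hdown
  have t1 := transfer hS hq hA' hB' ha hb h1 h2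
  have t2 := transfer hq hS hB' hA' hb ha h2 h1
  have hS1 : ∀ k : ℕ, 1 ≤ k → mkExp (supNorm E) k / k = mkExp (supNorm E) 1 := fun k hk =>
    le_antisymm (mkExp_le hS hk) (le_mkExp hE hne hdet hk)
  have hc : Tendsto (fun k : ℕ => ENNReal.ofReal (a + b) / (k : ℝ≥0∞)) atTop (nhds 0) := by
    simpa using ENNReal.Tendsto.const_div ENNReal.tendsto_nat_nhds_top
      (Or.inr ENNReal.ofReal_ne_top)
  have hT : Tendsto (fun k : ℕ => mkExp q k / (k : ℝ≥0∞)) atTop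
      (nhds (mkExp (supNorm E) 1)) := by
    have u1 : Tendsto (fun k : ℕ => mkExp (supNorm E) 1 - ENNReal.ofReal (a + b) / (k : ℝ≥0∞))
        atTop (nhds (mkExp (supNorm E) 1)) := by
      simpa using ENNReal.Tendsto.sub tendsto_const_nhds hc (Or.inr ENNReal.zero_ne_top)
    have u2 : Tendsto (fun k : ℕ => mkExp (supNorm E) 1 + ENNReal.ofReal (a + b) / (k : ℝ≥0∞))
        atTop (nhds (mkExp (supNorm E) 1)) := by
      simpa using tendsto_const_nhds.add hc
    refine tendsto_of_tendsto_of_tendsto_of_le_of_le' u1 u2 ?_ ?_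
    · filter_upwards [eventually_ge_atTop 1] with k hk
      rw [tsub_le_iff_right, ← hS1 k hk, ← ENNReal.add_div, add_comm a b]
      exact ENNReal.div_le_div_right (t2 k) _
    · filter_upwards [eventually_ge_atTop 1] with k hk
      rw [← hS1 k hk, ← ENNReal.add_div]
      exact ENNReal.div_le_div_right (t1 k) _
  refine ⟨hT, hT.limsup_eq, le_of_tendsto hT ?_⟩
  filter_upwards [eventually_ge_atTop 1] with k hk
  exact mkExp_le hq hk
end

section
/- Let s ≥ 1 be an integer and m > 0, and let q_{m,s} be the norm on ℂ[X] defined by q_{m,s}(P) = Σ_{r=0}^∞ ‖P^{(rs)}‖₀/((rs)!)^m, where ‖P‖₀ = Σ_{l=0}^{s-1} |P^{(l)}(0)|/l!. Then for every integer k ≥ 1, m_k(q_{m,s}) = s·m·⌈k/s⌉. Consequently the asymptotic exponent satisfies m*(q_{m,s}) = m while the Markov exponent satisfies m(q_{m,s}) = s·m; in particular, for s ≥ 2 the asymptotic exponent is strictly smaller than the Markov exponent. -/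
open Polynomial Filter
open scoped ENNReal

/-- The `k`-th derivative `P^{(k)}` of a polynomial in one complex variable. -/
noncomputable def dIter (k : ℕ) (P : Polynomial ℂ) : Polynomial ℂ :=
  (fun Q : Polynomial ℂ => Polynomial.derivative Q)^[k] P

/-- The Markov exponent `m_k(q) ∈ [0,∞]` for a (semi)norm `q` on `ℂ[X]`: the infimum of the
set of `s > 0` such that `q(P^{(k)}) ≤ M (deg P)^s q(P)` for some `M > 0` and all `P` with
`deg P ≥ 1` (`sInf ∅ = ∞` in `ℝ≥0∞`). -/
noncomputable def mkPoly (q : Polynomial ℂ → ℝ) (k : ℕ) : ℝ≥0∞ :=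
  sInf (ENNReal.ofReal '' {s : ℝ | 0 < s ∧ ∃ M : ℝ, 0 < M ∧
    ∀ P : Polynomial ℂ, 1 ≤ P.natDegree →
      q (dIter k P) ≤ M * (P.natDegree : ℝ) ^ s * q P})

/-- The norm `q_{m,s}(P) = ∑_{r=0}^∞ ‖P^{(rs)}‖₀ / ((rs)!)^m` (the sum is finite, since
`P^{(rs)} = 0` once `rs > deg P`). -/
noncomputable def qms (q0 : Polynomial ℂ → ℝ) (m : ℝ) (s : ℕ) (P : Polynomial ℂ) : ℝ :=
  ∑' r : ℕ, q0 (dIter (r * s) P) / ((r * s).factorial : ℝ) ^ m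

/-- The seminorm `‖P‖₀ = ∑_{l=0}^{s-1} |P^{(l)}(0)| / l!` on `ℂ[X]`. -/
noncomputable def q0s (s : ℕ) (P : Polynomial ℂ) : ℝ :=
  ∑ l ∈ Finset.range s, ‖(dIter l P).eval 0‖ / (l.factorial : ℝ)

noncomputable def wt (m : ℝ) (s j : ℕ) : ℝ :=
  1 / (((j % s).factorial : ℝ) * ((j / s * s).factorial : ℝ) ^ m)

lemma wt_pos (m : ℝ) (s j : ℕ) : 0 < wt m s j := by
  unfold wt
  have := Nat.factorial_pos (j % s)
  have := Nat.factorial_pos (j / s * s)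
  positivity

lemma dIter_dIter (a b : ℕ) (P : Polynomial ℂ) : dIter a (dIter b P) = dIter (a + b) P := by
  unfold dIter
  rw [Function.iterate_add_apply]

lemma norm_dIter (j : ℕ) (P : Polynomial ℂ) :
    ‖(dIter j P).eval 0‖ = (j.factorial : ℝ) * ‖P.coeff j‖ := by
  have : (dIter j P) = (derivative^[j] P) := rfl
  rw [this, ← Polynomial.coeff_zero_eq_eval_zero, Polynomial.coeff_iterate_derivative]
  simp [Nat.descFactorial_self]

lemma sum_blocks (s : ℕ) (f : ℕ → ℝ) (R : ℕ) :
    ∑ r ∈ Finset.range R, ∑ l ∈ Finset.range s, f (r * s + l) =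
      ∑ j ∈ Finset.range (R * s), f j := by
  induction R with
  | zero => simp
  | succ R ih =>
    rw [Finset.sum_range_succ, ih, add_mul, one_mul, Finset.sum_range_add]

lemma qms_eq (s : ℕ) (hs : 1 ≤ s) (m : ℝ) (P : Polynomial ℂ) (L : ℕ) (hL : P.natDegree < L) :
    qms (q0s s) m s P =
      ∑ j ∈ Finset.range L, (j.factorial : ℝ) * ‖P.coeff j‖ * wt m s j := by
  have hterm : ∀ r, q0s s (dIter (r * s) P) / ((r * s).factorial : ℝ) ^ m =
      ∑ l ∈ Finset.range s, ((fun j : ℕ => (j.factorial : ℝ) * ‖P.coeff j‖ * wt m s j)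
        (r * s + l)) := by
    intro r
    unfold q0s
    rw [Finset.sum_div]
    apply Finset.sum_congr rfl
    intro l hl
    have hl' : l < s := Finset.mem_range.mp hl
    have h1 : (r * s + l) % s = l := by
      rw [Nat.mul_add_mod_of_lt hl']
    have h2 : (r * s + l) / s = r := by
      rw [mul_comm, Nat.mul_add_div (by omega), Nat.div_eq_of_lt hl']; rfl
    rw [dIter_dIter, norm_dIter, add_comm l]
    simp only [wt, h1, h2]
    rw [div_div, mul_one_div]
  have hz : ∀ j, P.natDegree < j → (j.factorial : ℝ) * ‖P.coeff j‖ * wt m s j = 0 := by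
    intro j hj
    rw [Polynomial.coeff_eq_zero_of_natDegree_lt hj]; simp
  unfold qms
  rw [tsum_congr hterm, tsum_eq_sum (s := Finset.range L),
    sum_blocks s (fun j : ℕ => (j.factorial : ℝ) * ‖P.coeff j‖ * wt m s j) L]
  · symm
    apply Finset.sum_subset
    · intro x hx
      simp only [Finset.mem_range] at *
      nlinarith
    · intro x _ hx
      simp only [Finset.mem_range] at *
      exact hz x (by omega)
  · intro r hr
    apply Finset.sum_eq_zero
    intro l _
    simp only [Finset.mem_range] at hr
    apply hz
    nlinarith

lemma coeff_dIter (k j : ℕ) (P : Polynomial ℂ) :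
    (j.factorial : ℝ) * ‖(dIter k P).coeff j‖ = ((j + k).factorial : ℝ) * ‖P.coeff (j + k)‖ := by
  rw [← norm_dIter, ← norm_dIter, dIter_dIter]

lemma natDegree_dIter (k : ℕ) (P : Polynomial ℂ) : (dIter k P).natDegree ≤ P.natDegree :=
  (Polynomial.natDegree_iterate_derivative P k).trans (Nat.sub_le _ _)

lemma qms_dIter (s : ℕ) (hs : 1 ≤ s) (m : ℝ) (P : Polynomial ℂ) (k L : ℕ)
    (hL : P.natDegree < L) :
    qms (q0s s) m s (dIter k P) =
      ∑ j ∈ Finset.range L, ((j + k).factorial : ℝ) * ‖P.coeff (j + k)‖ * wt m s j := by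
  rw [qms_eq s hs m _ L ((natDegree_dIter k P).trans_lt hL)]
  simp only [coeff_dIter]

lemma wt_le (s : ℕ) (hs : 1 ≤ s) (m : ℝ) (hm : 0 < m) (j k c n : ℕ) (hc : k ≤ c * s)
    (hn : j + k ≤ n) (hn1 : 1 ≤ n) :
    wt m s j ≤ (s.factorial : ℝ) * (n : ℝ) ^ ((s : ℝ) * m * (c : ℝ)) * wt m s (j + k) := by
  unfold wt
  have h1 : j / s ≤ (j + k) / s := Nat.div_le_div_right (by omega)
  have h2 : (j + k) / s ≤ j / s + c := by
    calc (j + k) / s ≤ (j + c * s) / s := Nat.div_le_div_right (by omega)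
      _ = _ := Nat.add_mul_div_right _ _ (by omega)
  obtain ⟨d, hd⟩ := Nat.exists_eq_add_of_le h1
  have hdc : d ≤ c := by omega
  have h3 : (j + k) / s * s ≤ n := (Nat.div_mul_le_self _ _).trans hn
  have hB : ((j + k) / s * s).factorial ≤ (j / s * s).factorial * n ^ (c * s) := by
    have e : (j + k) / s * s = j / s * s + d * s := by rw [hd]; ring
    rw [e] at h3 ⊢
    rw [← Nat.factorial_mul_ascFactorial]
    apply Nat.mul_le_mul_left
    calc _ ≤ (j / s * s + d * s) ^ (d * s) := Nat.ascFactorial_le_pow_add _ _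
      _ ≤ n ^ (d * s) := Nat.pow_le_pow_left h3 _
      _ ≤ _ := Nat.pow_le_pow_right hn1 (Nat.mul_le_mul_right _ hdc)
  have hBr : (((j + k) / s * s).factorial : ℝ) ^ m ≤
      ((j / s * s).factorial : ℝ) ^ m * (n : ℝ) ^ ((s : ℝ) * m * (c : ℝ)) := by
    have e : (n : ℝ) ^ ((s : ℝ) * m * (c : ℝ)) = ((n : ℝ) ^ (c * s)) ^ m := by
      rw [← Real.rpow_natCast, ← Real.rpow_mul (by positivity)]
      congr 1; push_cast; ring
    rw [e, ← Real.mul_rpow (by positivity) (by positivity)]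
    apply Real.rpow_le_rpow (by positivity) _ hm.le
    exact_mod_cast hB
  have hl : (((j + k) % s).factorial : ℝ) ≤ s.factorial := by
    exact_mod_cast Nat.factorial_le (Nat.mod_lt _ (by omega)).le
  have hl0 : (1 : ℝ) ≤ ((j % s).factorial : ℝ) := by exact_mod_cast Nat.factorial_pos _
  have p1 : (0 : ℝ) < (((j + k) % s).factorial : ℝ) := by exact_mod_cast Nat.factorial_pos _
  have p2 : (0 : ℝ) < (((j + k) / s * s).factorial : ℝ) := by exact_mod_cast Nat.factorial_pos _
  have p3 : (0 : ℝ) < ((j / s * s).factorial : ℝ) := by exact_mod_cast Nat.factorial_pos _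
  have p4 := Real.rpow_pos_of_pos p3 m
  have p5 := Real.rpow_pos_of_pos p2 m
  have p6 : (0 : ℝ) ≤ (n : ℝ) ^ ((s : ℝ) * m * (c : ℝ)) := by positivity
  rw [mul_one_div, div_le_div_iff₀ (by positivity) (by positivity), one_mul]
  calc _ ≤ (s.factorial : ℝ) * (((j / s * s).factorial : ℝ) ^ m *
            (n : ℝ) ^ ((s : ℝ) * m * (c : ℝ))) := by gcongr
    _ = (s.factorial : ℝ) * (n : ℝ) ^ ((s : ℝ) * m * (c : ℝ)) *
          (1 * ((j / s * s).factorial : ℝ) ^ m) := by ring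
    _ ≤ _ := by gcongr

lemma upper (s : ℕ) (hs : 1 ≤ s) (m : ℝ) (hm : 0 < m) (k c : ℕ) (hc : k ≤ c * s)
    (P : Polynomial ℂ) (hP : 1 ≤ P.natDegree) :
    qms (q0s s) m s (dIter k P) ≤
      (s.factorial : ℝ) * (P.natDegree : ℝ) ^ ((s : ℝ) * m * (c : ℝ)) * qms (q0s s) m s P := by
  rw [qms_dIter s hs m P k (P.natDegree + 1) (by omega),
    qms_eq s hs m P (k + (P.natDegree + 1)) (by omega), Finset.sum_range_add _ k, mul_add,
    Finset.mul_sum (Finset.range (P.natDegree + 1))]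
  have h0 : 0 ≤ (s.factorial : ℝ) * (P.natDegree : ℝ) ^ ((s : ℝ) * m * (c : ℝ)) *
      ∑ j ∈ Finset.range k, (j.factorial : ℝ) * ‖P.coeff j‖ * wt m s j := by
    apply mul_nonneg (by positivity)
    apply Finset.sum_nonneg
    intro j _
    have := wt_pos m s j
    positivity
  refine le_trans ?_ (le_add_of_nonneg_left h0)
  apply Finset.sum_le_sum
  intro j _
  rw [add_comm k j]
  by_cases h : j + k ≤ P.natDegree
  · have := wt_le s hs m hm j k c P.natDegree hc h hP
    calc _ ≤ ((j + k).factorial : ℝ) * ‖P.coeff (j + k)‖ * _ :=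
          mul_le_mul_of_nonneg_left this (by positivity)
      _ = _ := by ring
  · rw [Polynomial.coeff_eq_zero_of_natDegree_lt (by omega)]; simp

lemma qms_X (s : ℕ) (hs : 1 ≤ s) (m : ℝ) (N k : ℕ) (hk : k ≤ N) :
    qms (q0s s) m s (dIter k (X ^ N)) = (N.factorial : ℝ) * wt m s (N - k) := by
  rw [qms_dIter s hs m _ k (N + 1) (by simp), Finset.sum_eq_single (N - k)]
  · rw [Nat.sub_add_cancel hk]; simp
  · intro j _ hj
    rw [Polynomial.coeff_X_pow, if_neg (by omega)]; simp
  · intro h; simp at h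

lemma lower1 (s : ℕ) (hs : 1 ≤ s) (m : ℝ) (hm : 0 < m) (k c r : ℕ) (hc : k ≤ c * s)
    (hc' : c * s < k + s) :
    ((r * s : ℕ) : ℝ) ^ ((s : ℝ) * m * (c : ℝ)) * wt m s ((r + c) * s) ≤
      (s.factorial : ℝ) * wt m s ((r + c) * s - k) := by
  have e0 : (r + c) * s - k = r * s + (c * s - k) := by rw [add_mul]; omega
  have hl' : c * s - k < s := by omega
  have h1 : ((r + c) * s - k) % s = c * s - k := by
    rw [e0, Nat.mul_add_mod_of_lt hl']
  have h2 : ((r + c) * s - k) / s = r := by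
    rw [e0, mul_comm, Nat.mul_add_div (by omega), Nat.div_eq_of_lt hl']; rfl
  have h3 : (r + c) * s / s = r + c := Nat.mul_div_cancel _ (by omega)
  unfold wt
  rw [h1, h2, h3, Nat.mul_mod_left]
  have hB : (r * s).factorial * (r * s) ^ (c * s) ≤ ((r + c) * s).factorial := by
    rw [add_mul]
    refine le_trans ?_ (Nat.factorial_mul_pow_le_factorial)
    exact Nat.mul_le_mul_left _ (Nat.pow_le_pow_left (Nat.le_succ _) _)
  have e : ((r * s : ℕ) : ℝ) ^ ((s : ℝ) * m * (c : ℝ)) = (((r * s : ℕ) : ℝ) ^ (c * s)) ^ m := by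
    rw [← Real.rpow_natCast, ← Real.rpow_mul (by positivity)]
    congr 1; push_cast; ring
  have hBr : ((r * s).factorial : ℝ) ^ m * (((r * s : ℕ) : ℝ) ^ (c * s)) ^ m ≤
      (((r + c) * s).factorial : ℝ) ^ m := by
    rw [← Real.mul_rpow (by positivity) (by positivity)]
    apply Real.rpow_le_rpow (by positivity) _ hm.le
    exact_mod_cast hB
  rw [e]
  have hl : ((c * s - k).factorial : ℝ) ≤ s.factorial := by
    exact_mod_cast Nat.factorial_le hl'.le
  have p1 : (0 : ℝ) < ((c * s - k).factorial : ℝ) := by exact_mod_cast Nat.factorial_pos _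
  have p2 : (0 : ℝ) < (((r + c) * s).factorial : ℝ) := by exact_mod_cast Nat.factorial_pos _
  have p3 : (0 : ℝ) < ((r * s).factorial : ℝ) := by exact_mod_cast Nat.factorial_pos _
  have p4 := Real.rpow_pos_of_pos p3 m
  have p5 := Real.rpow_pos_of_pos p2 m
  rw [mul_one_div, mul_one_div, div_le_div_iff₀ (by simpa using p5) (by positivity)]
  simp only [Nat.factorial_zero, Nat.cast_one, one_mul]
  calc _ = ((c * s - k).factorial : ℝ) *
        (((r * s).factorial : ℝ) ^ m * (((r * s : ℕ) : ℝ) ^ (c * s)) ^ m) := by ring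
    _ ≤ _ := by gcongr

lemma lower (s : ℕ) (hs : 1 ≤ s) (m : ℝ) (hm : 0 < m) (k c : ℕ) (hc : k ≤ c * s)
    (hc' : c * s < k + s) (t M : ℝ) (ht : 0 < t) (hM : 0 < M)
    (H : ∀ P : Polynomial ℂ, 1 ≤ P.natDegree →
      qms (q0s s) m s (dIter k P) ≤ M * (P.natDegree : ℝ) ^ t * qms (q0s s) m s P) :
    (s : ℝ) * m * c ≤ t := by
  by_contra! hlt
  set T := (s : ℝ) * m * c with hT
  have key : ∀ r : ℕ, 1 ≤ r → ((r * s : ℕ) : ℝ) ^ (T - t) ≤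
      s.factorial * M * ((c + 1 : ℕ) : ℝ) ^ t := by
    intro r hr
    have h1 := lower1 s hs m hm k c r hc hc'
    have hN : 1 ≤ (r + c) * s := Nat.mul_pos (by omega) hs
    have h2 := H (X ^ ((r + c) * s)) (by simpa using hN)
    have h3 := qms_X s hs m ((r + c) * s) 0 (Nat.zero_le _)
    have h4 := qms_X s hs m ((r + c) * s) k (by rw [add_mul]; omega)
    have h5 : dIter 0 (X ^ ((r + c) * s)) = (X ^ ((r + c) * s) : Polynomial ℂ) := rfl
    rw [h5, Nat.sub_zero] at h3
    rw [h3, h4, natDegree_X_pow] at h2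
    have hf : (0 : ℝ) < (((r + c) * s).factorial : ℝ) := by exact_mod_cast Nat.factorial_pos _
    have hw := wt_pos m s ((r + c) * s)
    have h6 : wt m s ((r + c) * s - k) ≤
        M * (((r + c) * s : ℕ) : ℝ) ^ t * wt m s ((r + c) * s) := by
      refine le_of_mul_le_mul_left ?_ hf
      linarith
    have h7 : ((r * s : ℕ) : ℝ) ^ T ≤ s.factorial * (M * (((r + c) * s : ℕ) : ℝ) ^ t) := by
      refine le_of_mul_le_mul_right ?_ hw
      refine h1.trans ?_
      rw [mul_assoc]
      exact mul_le_mul_of_nonneg_left h6 (by positivity)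
    have hx : (0 : ℝ) < ((r * s : ℕ) : ℝ) := by exact_mod_cast Nat.mul_pos hr hs
    have h8 : (((r + c) * s : ℕ) : ℝ) ^ t ≤ ((c + 1 : ℕ) : ℝ) ^ t * ((r * s : ℕ) : ℝ) ^ t := by
      rw [← Real.mul_rpow (by positivity) (by positivity)]
      apply Real.rpow_le_rpow (by positivity) _ ht.le
      have : (r + c) * s ≤ (c + 1) * (r * s) := by
        rw [← mul_assoc]
        apply Nat.mul_le_mul_right
        nlinarith
      exact_mod_cast this
    rw [Real.rpow_sub hx, div_le_iff₀ (Real.rpow_pos_of_pos hx t)]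
    calc _ ≤ _ := h7
      _ ≤ s.factorial * (M * (((c + 1 : ℕ) : ℝ) ^ t * ((r * s : ℕ) : ℝ) ^ t)) := by gcongr
      _ = _ := by ring
  have htend : Tendsto (fun r : ℕ => ((r * s : ℕ) : ℝ) ^ (T - t)) atTop atTop := by
    refine (tendsto_rpow_atTop (sub_pos.mpr hlt)).comp ?_
    refine tendsto_natCast_atTop_atTop.comp ?_
    exact tendsto_id.atTop_mul_const' hs
  obtain ⟨r, hr1, hr2⟩ := ((htend.eventually_gt_atTop _).and (eventually_ge_atTop 1)).exists
  exact absurd (key r hr2) (not_le.mpr hr1)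

lemma ceil_facts (s k : ℕ) (hs : 1 ≤ s) :
    k ≤ ⌈(k : ℝ) / (s : ℝ)⌉₊ * s ∧ ⌈(k : ℝ) / (s : ℝ)⌉₊ * s < k + s := by
  have hs' : (0 : ℝ) < s := by exact_mod_cast hs
  have h1 := Nat.le_ceil ((k : ℝ) / (s : ℝ))
  have h2 := Nat.ceil_lt_add_one (a := (k : ℝ) / (s : ℝ)) (by positivity)
  rw [div_le_iff₀ hs'] at h1
  have h3 : (⌈(k : ℝ) / (s : ℝ)⌉₊ : ℝ) * s < k + s := by
    have := mul_lt_mul_of_pos_right h2 hs'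
    rwa [add_mul, div_mul_cancel₀ _ hs'.ne', one_mul] at this
  exact ⟨by exact_mod_cast h1, by exact_mod_cast h3⟩

lemma mk_eq (s : ℕ) (hs : 1 ≤ s) (m : ℝ) (hm : 0 < m) (k : ℕ) (hk : 1 ≤ k) :
      mkPoly (qms (q0s s) m s) k =
        ENNReal.ofReal ((s : ℝ) * m * (⌈(k : ℝ) / (s : ℝ)⌉₊ : ℝ)) := by
  obtain ⟨h1, h2⟩ := ceil_facts s k hs
  have hc : 0 < ⌈(k : ℝ) / (s : ℝ)⌉₊ := by
    rcases Nat.eq_zero_or_pos ⌈(k : ℝ) / (s : ℝ)⌉₊ with h | h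
    · rw [h] at h1; omega
    · exact h
  unfold mkPoly
  apply le_antisymm
  · apply sInf_le
    refine ⟨_, ⟨?_, (s.factorial : ℝ), by exact_mod_cast Nat.factorial_pos _, ?_⟩, rfl⟩
    · have : 0 < s := hs
      positivity
    · intro P hP
      exact upper s hs m hm k _ h1 P hP
  · apply le_sInf
    rintro _ ⟨t, ⟨ht, M, hM, H⟩, rfl⟩
    exact ENNReal.ofReal_le_ofReal (lower s hs m hm k _ h1 h2 t M ht hM H)

lemma limsup_eq' (s : ℕ) (hs : 1 ≤ s) (m : ℝ) (hm : 0 < m) :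
    Filter.atTop.limsup (fun k : ℕ => mkPoly (qms (q0s s) m s) k / (k : ℝ≥0∞)) =
        ENNReal.ofReal m := by
  apply Tendsto.limsup_eq
  have hreal : Tendsto (fun k : ℕ => (s : ℝ) * m * (⌈(k : ℝ) / (s : ℝ)⌉₊ : ℝ) / (k : ℝ)) atTop
      (nhds m) := by
    have hup : Tendsto (fun k : ℕ => m + (m * s) / (k : ℝ)) atTop (nhds m) := by
      have := (tendsto_const_div_atTop_nhds_zero_nat (m * s)).const_add m
      simpa using this
    refine tendsto_of_tendsto_of_tendsto_of_le_of_le' tendsto_const_nhds hup ?_ ?_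
    · filter_upwards [eventually_ge_atTop 1] with k hk
      have hk' : (0 : ℝ) < k := by exact_mod_cast hk
      have h1 : (k : ℝ) ≤ (⌈(k : ℝ) / (s : ℝ)⌉₊ : ℝ) * s := by
        exact_mod_cast (ceil_facts s k hs).1
      rw [le_div_iff₀ hk']
      nlinarith
    · filter_upwards [eventually_ge_atTop 1] with k hk
      have hk' : (0 : ℝ) < k := by exact_mod_cast hk
      have h1 : (⌈(k : ℝ) / (s : ℝ)⌉₊ : ℝ) * s ≤ k + s := by
        exact_mod_cast (ceil_facts s k hs).2.le
      rw [div_le_iff₀ hk', add_mul, div_mul_cancel₀ _ hk'.ne']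
      nlinarith
  refine (ENNReal.tendsto_ofReal hreal).congr' ?_
  filter_upwards [eventually_ge_atTop 1] with k hk
  have hk' : (0 : ℝ) < k := by exact_mod_cast hk
  rw [mk_eq s hs m hm k hk, ENNReal.ofReal_div_of_pos hk', ENNReal.ofReal_natCast]

lemma mk_one (s : ℕ) (hs : 1 ≤ s) (m : ℝ) (hm : 0 < m) :
    mkPoly (qms (q0s s) m s) 1 = ENNReal.ofReal ((s : ℝ) * m) := by
  rw [mk_eq s hs m hm 1 le_rfl]
  obtain ⟨h1, h2⟩ := ceil_facts s 1 hs
  have : ⌈((1 : ℕ) : ℝ) / (s : ℝ)⌉₊ = 1 := by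
    generalize ⌈((1 : ℕ) : ℝ) / (s : ℝ)⌉₊ = c at *
    rcases c with _ | _ | c
    · omega
    · rfl
    · exfalso; nlinarith
  rw [this]; simp

/-- For the norm `q_{m,s}` built from `‖P‖₀ = ∑_{l=0}^{s-1} |P^{(l)}(0)|/l!`
(`s ≥ 1` an integer, `m > 0`): `m_k(q_{m,s}) = s·m·⌈k/s⌉` for every `k ≥ 1`; consequently the
asymptotic exponent is `m*(q_{m,s}) = m` while the Markov exponent is `m(q_{m,s}) = s·m`;
in particular for `s ≥ 2` the asymptotic exponent is strictly smaller than the Markov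
exponent. -/
theorem statement10 (s : ℕ) (hs : 1 ≤ s) (m : ℝ) (hm : 0 < m) :
    (∀ k : ℕ, 1 ≤ k →
      mkPoly (qms (q0s s) m s) k =
        ENNReal.ofReal ((s : ℝ) * m * (⌈(k : ℝ) / (s : ℝ)⌉₊ : ℝ))) ∧
    Filter.atTop.limsup (fun k : ℕ => mkPoly (qms (q0s s) m s) k / (k : ℝ≥0∞)) =
        ENNReal.ofReal m ∧
    mkPoly (qms (q0s s) m s) 1 = ENNReal.ofReal ((s : ℝ) * m) ∧
    (2 ≤ s →
      Filter.atTop.limsup (fun k : ℕ => mkPoly (qms (q0s s) m s) k / (k : ℝ≥0∞)) <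
        mkPoly (qms (q0s s) m s) 1) := by
  refine ⟨fun k hk => mk_eq s hs m hm k hk, limsup_eq' s hs m hm, mk_one s hs m hm, fun h2 => ?_⟩
  rw [limsup_eq' s hs m hm, mk_one s hs m hm]
  have h2' : (2 : ℝ) ≤ s := by exact_mod_cast h2
  exact (ENNReal.ofReal_lt_ofReal_iff (by positivity)).mpr (by nlinarith)
end
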